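/- Let α and α' be smoothly embedded arcs in the 3-sphere S³ having the same pair of distinct endpoints and disjoint interiors, and suppose the circle α ∪ α' is unknotted, i.e., it is the boundary of a smoothly embedded disc in S³. Then there is a smooth ambient isotopy of S³ that fixes the two endpoints throughout and sends α to α'. -/

import Mathlib

open Metric Manifold Set

noncomputable section

/-- The 3-sphere: the unit sphere in `EuclideanSpace ℝ (Fin 4)`. -/
abbrev S3 : Type := Metric.sphere (0 : EuclideanSpace ℝ (Fin 4)) 1

/-- A smooth ambient isotopy of the 3-sphere: a smooth map
`h : [0,1] × S³ → S³` with `h 0 = id` and `h λ` a diffeomorphism for every `λ`. -/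
structure AmbientIsotopy where
  toFun : Set.Icc (0:ℝ) 1 → S3 → S3
  smooth : ContMDiff ((𝓡∂ 1).prod (𝓡 3)) (𝓡 3) (⊤ : ℕ∞)
    (fun p : Set.Icc (0:ℝ) 1 × S3 => toFun p.1 p.2)
  init : ∀ x, toFun 0 x = x
  diffeo : ∀ lam, ∃ d : Diffeomorph (𝓡 3) (𝓡 3) S3 S3 (⊤ : ℕ∞), ∀ x, toFun lam x = d x

/-- The ambient isotopy `h` sends the subset `X` of `S³` to the subset `Y`. -/
def AmbientIsotopy.Sends (h : AmbientIsotopy) (X Y : Set S3) : Prop :=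
  h.toFun 1 '' X = Y

/-- A smoothly embedded disc in `S³`: a smooth injective immersion of the closed unit
disc `D² ⊆ ℝ²` which is a topological embedding. -/
structure EmbeddedDisc where
  emb : EuclideanSpace ℝ (Fin 2) → S3
  smooth : ContMDiff 𝓘(ℝ, EuclideanSpace ℝ (Fin 2)) (𝓡 3) (⊤ : ℕ∞) emb
  immersion : ∀ p ∈ Metric.closedBall (0 : EuclideanSpace ℝ (Fin 2)) 1,
    Function.Injective (mfderiv 𝓘(ℝ, EuclideanSpace ℝ (Fin 2)) (𝓡 3) emb p)
  isEmbedding : Topology.IsEmbedding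
    ((Metric.closedBall (0 : EuclideanSpace ℝ (Fin 2)) 1).restrict emb)

/-- The embedded disc as a subset of `S³`. -/
def EmbeddedDisc.carrier (D : EmbeddedDisc) : Set S3 :=
  D.emb '' Metric.closedBall 0 1

/-- The boundary circle of an embedded disc: the image of the unit circle `∂D²`. -/
def EmbeddedDisc.bdry (D : EmbeddedDisc) : Set S3 :=
  D.emb '' Metric.sphere 0 1
/-- A smoothly embedded arc in `S³`: a smooth embedding of the interval `[0,1]`
(a smooth injective immersion on `[0,1]`; by compactness it is automatically a
topological embedding of `[0,1]`). -/
structure EmbeddedArc where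
  emb : ℝ → S3
  smooth : ContMDiff 𝓘(ℝ) (𝓡 3) (⊤ : ℕ∞) emb
  immersion : ∀ t ∈ Set.Icc (0:ℝ) 1,
    Function.Injective (mfderiv 𝓘(ℝ) (𝓡 3) emb t)
  inj : Set.InjOn emb (Set.Icc 0 1)

/-- The embedded arc as a subset of `S³`. -/
def EmbeddedArc.carrier (a : EmbeddedArc) : Set S3 :=
  a.emb '' Set.Icc 0 1

/-- The interior of an embedded arc: the image of the open interval `(0,1)`. -/
def EmbeddedArc.interior (a : EmbeddedArc) : Set S3 :=
  a.emb '' Set.Ioo 0 1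


section AuxGeneral

open Filter Topology ContDiff

variable {V W : Type*} [NormedAddCommGroup V] [NormedSpace ℝ V]
  [NormedAddCommGroup W] [NormedSpace ℝ W]

/-- A map injective and étale on a compact set is a diffeomorphism near the compact set. -/
lemma aux_tub [CompleteSpace V] [CompleteSpace W] (G : V → W) (U K : Set V) (hU : IsOpen U) (hK : IsCompact K) (hKU : K ⊆ U)
    (hG : ContDiffOn ℝ ∞ G U) (hinj : InjOn G K)
    (hd : ∀ v ∈ K, ∃ L : V ≃L[ℝ] W, (L : V →L[ℝ] W) = fderiv ℝ G v) :
    ∃ (O : Set V) (g : W → V), IsOpen O ∧ K ⊆ O ∧ O ⊆ U ∧ ContDiffOn ℝ ∞ G O ∧ IsOpen (G '' O) ∧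
      ContDiffOn ℝ ∞ g (G '' O) ∧ ∀ v ∈ O, g (G v) = v := by
  have hat : ∀ v ∈ U, ContDiffAt ℝ ∞ G v := fun v hv => hG.contDiffAt (hU.mem_nhds hv)
  have hfd : ∀ v ∈ U, HasFDerivAt G (fderiv ℝ G v) v := fun v hv =>
    ((hat v hv).differentiableAt (by simp)).hasFDerivAt
  have hst : ∀ v ∈ U, HasStrictFDerivAt G (fderiv ℝ G v) v := fun v hv =>
    (hat v hv).hasStrictFDerivAt (by simp)
  obtain ⟨O1, hO1, hKO1, hinj1⟩ := hinj.exists_isOpen_superset hK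
    (fun v hv => (hat v (hKU hv)).continuousAt) (by
      intro v hv
      obtain ⟨L, hL⟩ := hd v hv
      have h := hst v (hKU hv)
      rw [← hL] at h
      refine ⟨(h.toOpenPartialHomeomorph G).source,
        (h.toOpenPartialHomeomorph G).open_source.mem_nhds h.mem_toOpenPartialHomeomorph_source, ?_⟩
      have := (h.toOpenPartialHomeomorph G).injOn
      simpa using this)
  set R := range ((↑) : (V ≃L[ℝ] W) → V →L[ℝ] W) with hR
  have hRo : IsOpen R := ContinuousLinearEquiv.isOpen
  have hcont : ContinuousOn (fderiv ℝ G) U := hG.continuousOn_fderiv_of_isOpen hU (by simp)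
  have hO2 : IsOpen (U ∩ fderiv ℝ G ⁻¹' R) := hcont.isOpen_inter_preimage hU hRo
  set O := O1 ∩ (U ∩ fderiv ℝ G ⁻¹' R) with hO
  have hOo : IsOpen O := hO1.inter hO2
  have hinjO : InjOn G O := hinj1.mono inter_subset_left
  have hleft : ∀ v ∈ O, Function.invFunOn G O (G v) = v := fun v hv => hinjO.leftInvOn_invFunOn hv
  refine ⟨O, Function.invFunOn G O, hOo, ?_, fun v hv => hv.2.1, hG.mono fun v hv => hv.2.1, ?_, ?_, hleft⟩
  · exact fun v hv => ⟨hKO1 hv, hKU hv, hd v hv⟩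
  · rw [isOpen_iff_mem_nhds]
    rintro _ ⟨v, hv, rfl⟩
    obtain ⟨L, hL⟩ := hv.2.2
    have h := hst v hv.2.1
    rw [← hL] at h
    rw [← h.map_nhds_eq_of_equiv]
    exact image_mem_map (hOo.mem_nhds hv)
  · rintro _ ⟨v, hv, rfl⟩
    obtain ⟨L, hL⟩ := hv.2.2
    have h := hst v hv.2.1
    have h2 := hfd v hv.2.1
    rw [← hL] at h h2
    have h3 := (hat v hv.2.1).to_localInverse h2 (by simp)
    refine (h3.congr_of_eventuallyEq ?_).contDiffWithinAt
    have := h.localInverse_unique (g := Function.invFunOn G O) (by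
      filter_upwards [hOo.mem_nhds hv] with x hx using hleft x hx)
    exact this

open Classical in
/-- Transporting a compactly supported one-parameter family of diffeomorphisms. -/
lemma aux_transport (G : V → W) (g : W → V) (O C : Set V) (hC : IsCompact C) (hCO : C ⊆ O)
    (hG : ContDiffOn ℝ ∞ G O) (hGO : IsOpen (G '' O)) (hg : ContDiffOn ℝ ∞ g (G '' O))
    (hgG : ∀ v ∈ O, g (G v) = v)
    (E : ℝ → V → V) (hE : ContDiff ℝ ∞ (fun p : ℝ × V => E p.1 p.2))
    (hE0 : ∀ v, E 0 v = v) (hEC : ∀ t, ∀ v ∉ C, E t v = v) (hEinv : ∀ t v, E (-t) (E t v) = v) :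
    ∃ H : ℝ → W → W, ContDiff ℝ ∞ (fun p : ℝ × W => H p.1 p.2) ∧ (∀ x, H 0 x = x) ∧
      (∀ t x, H (-t) (H t x) = x) ∧ (∀ t, ∀ v ∈ O, H t (G v) = G (E t v)) ∧
      (∀ t, ∀ x ∉ G '' O, H t x = x) ∧ (∀ t, ∀ v ∈ O, E t v ∈ O) := by
  have hEO : ∀ t, ∀ v ∈ O, E t v ∈ O := by
    intro t v hv
    by_contra hn
    have h1 := hEC (-t) _ (fun h => hn (hCO h))
    rw [hEinv] at h1
    exact hn (h1 ▸ hv)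
  let H : ℝ → W → W := fun t x => if x ∈ G '' O then G (E t (g x)) else x
  have hHG : ∀ t, ∀ v ∈ O, H t (G v) = G (E t v) := by
    intro t v hv
    simp only [H, if_pos (mem_image_of_mem G hv), hgG v hv]
  have hHn : ∀ t, ∀ x ∉ G '' O, H t x = x := fun t x hx => by simp only [H, if_neg hx]
  have hHC : ∀ t, ∀ x ∉ G '' C, H t x = x := by
    intro t x hx
    by_cases h : x ∈ G '' O
    · obtain ⟨v, hv, rfl⟩ := h
      rw [hHG t v hv, hEC t v (fun h => hx (mem_image_of_mem G h))]
    · exact hHn t x h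
  refine ⟨H, ?_, ?_, ?_, hHG, hHn, hEO⟩
  · rw [contDiff_iff_contDiffAt]
    rintro ⟨t, x⟩
    by_cases hx : x ∈ G '' O
    · have hmem : (univ : Set ℝ) ×ˢ (G '' O) ∈ 𝓝 (t, x) :=
        (isOpen_univ.prod hGO).mem_nhds ⟨trivial, hx⟩
      have h1 : ContDiffOn ℝ ∞ (fun p : ℝ × W => (p.1, g p.2)) (univ ×ˢ (G '' O)) :=
        contDiffOn_fst.prodMk (hg.comp contDiffOn_snd (fun p hp => hp.2))
      have h2 : ContDiffOn ℝ ∞ (fun p : ℝ × W => E p.1 (g p.2)) (univ ×ˢ (G '' O)) :=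
        hE.comp_contDiffOn h1
      have h3 : ContDiffOn ℝ ∞ (fun p : ℝ × W => G (E p.1 (g p.2))) (univ ×ˢ (G '' O)) :=
        hG.comp h2 (by
          rintro ⟨s, _⟩ ⟨-, v, hv, rfl⟩
          simp only [hgG v hv]
          exact hEO s v hv)
      refine (h3.contDiffAt hmem).congr_of_eventuallyEq ?_
      filter_upwards [hmem] with p hp
      simp only [H, if_pos hp.2]
    · have hcl : IsClosed (G '' C) := (hC.image_of_continuousOn (hG.continuousOn.mono hCO)).isClosed
      have hmem : (univ : Set ℝ) ×ˢ (G '' C)ᶜ ∈ 𝓝 (t, x) :=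
        (isOpen_univ.prod hcl.isOpen_compl).mem_nhds ⟨trivial, fun h => hx (image_mono hCO h)⟩
      refine contDiffAt_snd.congr_of_eventuallyEq ?_
      filter_upwards [hmem] with p hp
      exact hHC p.1 p.2 hp.2
  · intro x
    by_cases h : x ∈ G '' O
    · obtain ⟨v, hv, rfl⟩ := h
      rw [hHG 0 v hv, hE0]
    · exact hHn 0 x h
  · intro t x
    by_cases h : x ∈ G '' O
    · obtain ⟨v, hv, rfl⟩ := h
      rw [hHG t v hv, hHG (-t) _ (hEO t v hv), hEinv]
    · rw [hHn t x h, hHn (-t) x h]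

end AuxGeneral

section AuxChart

open Filter Topology ContDiff

abbrev E4 : Type := EuclideanSpace ℝ (Fin 4)

/-- Triple cross product in `ℝ⁴`. -/
def cross4 (a b c : E4) : E4 := WithLp.toLp 2 (fun i : Fin 4 =>
  (-1) ^ (i : ℕ) * ((Matrix.of ![(a : Fin 4 → ℝ), b, c]).submatrix id i.succAbove).det)

lemma cross4_inner (a b c v : E4) :
    inner ℝ (cross4 a b c) v = (Matrix.of ![(v : Fin 4 → ℝ), a, b, c]).det := by
  rw [Matrix.det_succ_row_zero]
  simp only [cross4, PiLp.inner_apply]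
  refine Finset.sum_congr rfl fun i _ => ?_
  simp only [RCLike.inner_apply, conj_trivial]
  have : (Matrix.of ![(v : Fin 4 → ℝ), a, b, c]).submatrix Fin.succ i.succAbove
      = (Matrix.of ![(a : Fin 4 → ℝ), b, c]).submatrix id i.succAbove := by
    ext k l
    fin_cases k <;> rfl
  rw [this]
  simp
  ring

lemma cross4_inner1 (a b c : E4) : inner ℝ (cross4 a b c) a = 0 := by
  rw [cross4_inner]
  exact Matrix.det_zero_of_row_eq (i := 0) (j := 1) (by decide) rfl

lemma cross4_inner2 (a b c : E4) : inner ℝ (cross4 a b c) b = 0 := by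
  rw [cross4_inner]
  exact Matrix.det_zero_of_row_eq (i := 0) (j := 2) (by decide) rfl

lemma cross4_inner3 (a b c : E4) : inner ℝ (cross4 a b c) c = 0 := by
  rw [cross4_inner]
  exact Matrix.det_zero_of_row_eq (i := 0) (j := 3) (by decide) rfl

lemma cross4_ne_zero (a b c : E4) (h : LinearIndependent ℝ ![a, b, c]) : cross4 a b c ≠ 0 := by
  have hs : Submodule.span ℝ (range ![a, b, c]) ≠ ⊤ := by
    intro ht
    have h1 := finrank_span_eq_card h
    rw [ht, finrank_top] at h1
    simp at h1
  obtain ⟨v, hv⟩ : ∃ v, v ∉ Submodule.span ℝ (range ![a, b, c]) := by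
    by_contra hn
    push Not at hn
    exact hs (Submodule.eq_top_iff'.2 hn)
  have h4 : LinearIndependent ℝ ![v, a, b, c] := linearIndependent_finCons.2 ⟨h, hv⟩
  have h5 : LinearIndependent ℝ (Matrix.of ![(v : Fin 4 → ℝ), a, b, c]).row := by
    have h6 := h4.map' (WithLp.linearEquiv 2 ℝ (Fin 4 → ℝ)).toLinearMap
      (LinearEquiv.ker _)
    have h8 : (Matrix.of ![(v : Fin 4 → ℝ), a, b, c]).row
        = (WithLp.linearEquiv 2 ℝ (Fin 4 → ℝ)).toLinearMap ∘ ![v, a, b, c] := by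
      ext k l
      fin_cases k <;> rfl
    rw [h8]
    exact h6
  rw [Matrix.linearIndependent_rows_iff_isUnit, Matrix.isUnit_iff_isUnit_det] at h5
  intro h0
  have h7 := cross4_inner a b c v
  rw [h0, inner_zero_left] at h7
  exact h5.ne_zero h7.symm

lemma cross4_contDiffOn {X : Type*} [NormedAddCommGroup X] [NormedSpace ℝ X] {s : Set X}
    {a b c : X → E4} (ha : ContDiffOn ℝ ∞ a s) (hb : ContDiffOn ℝ ∞ b s)
    (hc : ContDiffOn ℝ ∞ c s) : ContDiffOn ℝ ∞ (fun x => cross4 (a x) (b x) (c x)) s := by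
  rw [contDiffOn_euclidean] at *
  intro i
  simp only [cross4, Matrix.det_fin_three, Matrix.submatrix_apply, Matrix.of_apply, id]
  have ha' := fun j => ha j
  simp only [Matrix.cons_val]
  fun_prop

/-- The closed unit disc in `ℝ × ℝ`. -/
def disc2 : Set (ℝ × ℝ) := {u | u.1 ^ 2 + u.2 ^ 2 ≤ 1}

lemma isCompact_disc2 : IsCompact disc2 := by
  refine Metric.isCompact_of_isClosed_isBounded
    (isClosed_le (by fun_prop) continuous_const) ?_
  refine (Metric.isBounded_closedBall (x := (0 : ℝ × ℝ)) (r := 1)).subset ?_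
  intro u hu
  have hu : u.1 ^ 2 + u.2 ^ 2 ≤ 1 := hu
  rw [mem_closedBall_zero_iff, Prod.norm_def, Real.norm_eq_abs, Real.norm_eq_abs]
  refine max_le ?_ ?_ <;> rw [abs_le_one_iff_mul_self_le_one] <;> nlinarith [sq_nonneg u.1, sq_nonneg u.2]

abbrev V4 : Type := (ℝ × ℝ) × (ℝ × ℝ)

lemma aux_chart (f : ℝ × ℝ → E4) (U0 : Set (ℝ × ℝ)) (hU0 : IsOpen U0) (hDU : disc2 ⊆ U0)
    (hf : ContDiffOn ℝ ∞ f U0) (hf1 : ∀ u, ‖f u‖ = 1) (hinj : InjOn f disc2)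
    (hd : ∀ u ∈ disc2, Function.Injective (fderiv ℝ f u)) :
    ∃ (G : V4 → E4) (O : Set V4) (g : E4 → V4), IsOpen O ∧ disc2 ×ˢ {((0 : ℝ), (1 : ℝ))} ⊆ O ∧
      ContDiffOn ℝ ∞ G O ∧ IsOpen (G '' O) ∧ ContDiffOn ℝ ∞ g (G '' O) ∧ (∀ v ∈ O, g (G v) = v) ∧
      (∀ u ∈ disc2, G (u, (0, 1)) = f u) ∧ (∀ v ∈ O, ‖G v‖ = |v.2.2|) := by
  set n : ℝ × ℝ → E4 := fun u => cross4 (f u) (fderiv ℝ f u (1, 0)) (fderiv ℝ f u (0, 1)) with hn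
  have hf' : ContDiffOn ℝ ∞ (fderiv ℝ f) U0 := hf.fderiv_of_isOpen hU0 (by simp)
  have hnC : ContDiffOn ℝ ∞ n U0 := cross4_contDiffOn hf (hf'.clm_apply contDiffOn_const)
    (hf'.clm_apply contDiffOn_const)
  have hnf : ∀ u, inner ℝ (n u) (f u) = 0 := fun u => cross4_inner1 _ _ _
  have hlin : ∀ u (w : ℝ × ℝ), fderiv ℝ f u w = w.1 • fderiv ℝ f u (1, 0) + w.2 • fderiv ℝ f u (0, 1) := by
    intro u w
    rw [← map_smul, ← map_smul, ← map_add]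
    congr 1
    ext <;> simp
  have hnd : ∀ u w, inner ℝ (n u) (fderiv ℝ f u w) = 0 := by
    intro u w
    rw [hlin, inner_add_right, inner_smul_right, inner_smul_right, cross4_inner2, cross4_inner3]
    simp
  have hfat : ∀ u ∈ U0, HasFDerivAt f (fderiv ℝ f u) u := fun u hu =>
    ((hf.contDiffAt (hU0.mem_nhds hu)).differentiableAt (by simp)).hasFDerivAt
  have hff : ∀ u ∈ U0, ∀ w, inner ℝ (f u) (fderiv ℝ f u w) = 0 := by
    intro u hu w
    have h1 := ((hfat u hu).inner ℝ (hfat u hu))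
    have h2 : (fun t => inner ℝ (f t) (f t)) = fun _ => (1 : ℝ) := by
      ext t
      rw [real_inner_self_eq_norm_sq, hf1]; norm_num
    rw [h2] at h1
    have h3 := h1.unique (hasFDerivAt_const (1 : ℝ) u)
    have h4 := congrArg (fun L => L w) h3
    simp [fderivInnerCLM_apply] at h4
    rw [real_inner_comm] at h4
    rw [real_inner_comm]
    linarith
  have hn0 : ∀ u ∈ disc2, n u ≠ 0 := by
    intro u hu
    apply cross4_ne_zero
    rw [Fintype.linearIndependent_iff]
    intro c hc
    simp only [Fin.sum_univ_three, Matrix.cons_val_zero, Matrix.cons_val_one, Matrix.cons_val] at hc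
    have h1 : c 0 • f u + fderiv ℝ f u (c 1, c 2) = 0 := by
      rw [hlin, ← hc]; simp only [add_assoc]
    have h2 : c 0 = 0 := by
      have := congrArg (fun x => inner ℝ (f u) x) h1
      simpa [inner_add_right, inner_smul_right, hff u (hDU hu), hf1] using this
    rw [h2, zero_smul, zero_add] at h1
    have h3 := hd u hu (h1.trans (map_zero _).symm)
    have h4 : c 1 = 0 := congrArg Prod.fst h3
    have h5 : c 2 = 0 := congrArg Prod.snd h3
    intro i
    fin_cases i
    exacts [h2, h4, h5]
  -- the unnormalised tubular map
  set S : (ℝ × ℝ) × ℝ → E4 := fun p => f p.1 + p.2 • n p.1 with hS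
  have hS0 : ∀ p, S p ≠ 0 := by
    intro p h0
    have := congrArg (fun x => inner ℝ (f p.1) x) h0
    simp [hS, inner_add_right, inner_smul_right, real_inner_comm (n p.1), hnf, hf1] at this
  have hSC : ContDiffOn ℝ ∞ S (U0 ×ˢ univ) :=
    (hf.comp contDiffOn_fst (fun p hp => hp.1)).add
      (contDiffOn_snd.smul (hnC.comp contDiffOn_fst (fun p hp => hp.1)))
  set N : (ℝ × ℝ) × ℝ → ℝ := fun p => ‖S p‖⁻¹ with hN
  have hNC : ContDiffOn ℝ ∞ N (U0 ×ˢ univ) :=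
    (hSC.norm ℝ (fun p _ => hS0 p)).inv (fun p _ => norm_ne_zero_iff.2 (hS0 p))
  set P : V4 →L[ℝ] (ℝ × ℝ) × ℝ := (ContinuousLinearMap.fst ℝ (ℝ × ℝ) (ℝ × ℝ)).prod
    ((ContinuousLinearMap.fst ℝ ℝ ℝ).comp (ContinuousLinearMap.snd ℝ (ℝ × ℝ) (ℝ × ℝ))) with hP
  set rr : V4 →L[ℝ] ℝ :=
    (ContinuousLinearMap.snd ℝ ℝ ℝ).comp (ContinuousLinearMap.snd ℝ (ℝ × ℝ) (ℝ × ℝ)) with hrr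
  set G : V4 → E4 := fun v => (rr v * N (P v)) • S (P v) with hG
  set U : Set V4 := U0 ×ˢ univ with hU
  have hPm : MapsTo P U (U0 ×ˢ univ) := fun v hv => ⟨hv.1, trivial⟩
  have hGC : ContDiffOn ℝ ∞ G U :=
    ((rr.contDiff.contDiffOn).mul (hNC.comp P.contDiff.contDiffOn hPm)).smul
      (hSC.comp P.contDiff.contDiffOn hPm)
  have hGf : ∀ u, G (u, (0, 1)) = f u := by
    intro u
    simp [hG, hP, hrr, hN, hS, hf1]
  have hGn : ∀ v, ‖G v‖ = |v.2.2| := by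
    intro v
    have : ‖S (P v)‖ ≠ 0 := norm_ne_zero_iff.2 (hS0 _)
    simp only [hG, hN, norm_smul, norm_mul, norm_inv, norm_norm]
    rw [mul_assoc, inv_mul_cancel₀ this, mul_one]
    rfl
  obtain ⟨O, g, h1, h2, h3, h4, h5, h6, h7⟩ := aux_tub G U (disc2 ×ˢ {((0 : ℝ), (1 : ℝ))})
    (hU0.prod isOpen_univ) (isCompact_disc2.prod isCompact_singleton)
    (fun v hv => ⟨hDU hv.1, trivial⟩) hGC (by
      rintro ⟨u, p⟩ ⟨hu, hp⟩ ⟨u', p'⟩ ⟨hu', hp'⟩ h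
      simp only [mem_singleton_iff] at hp hp'
      subst hp hp'
      rw [hGf, hGf] at h
      rw [show u = u' from hinj hu hu' h]) (by
      rintro ⟨u, p⟩ ⟨hu, hp⟩
      simp only [mem_singleton_iff] at hp hu
      subst hp
      have huU := hDU hu
      have hv : P (u, ((0 : ℝ), (1 : ℝ))) = (u, 0) := rfl
      have hmem : (U0 ×ˢ (univ : Set ℝ)) ∈ 𝓝 (u, (0 : ℝ)) :=
        (hU0.prod isOpen_univ).mem_nhds ⟨huU, trivial⟩
      have hNd : HasFDerivAt N (fderiv ℝ N (u, 0)) (P (u, ((0 : ℝ), (1 : ℝ)))) :=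
        ((hNC.contDiffAt hmem).differentiableAt (by simp)).hasFDerivAt
      have hnd' : HasFDerivAt n (fderiv ℝ n u) u :=
        ((hnC.contDiffAt (hU0.mem_nhds huU)).differentiableAt (by simp)).hasFDerivAt
      have hsn : HasFDerivAt (fun p : (ℝ × ℝ) × ℝ => p.2) (ContinuousLinearMap.snd ℝ (ℝ × ℝ) ℝ)
        (u, (0 : ℝ)) := hasFDerivAt_snd
      have hfn : HasFDerivAt (fun p : (ℝ × ℝ) × ℝ => n p.1)
        ((fderiv ℝ n u).comp (ContinuousLinearMap.fst ℝ (ℝ × ℝ) ℝ)) (u, (0 : ℝ)) :=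
        HasFDerivAt.comp (f := (Prod.fst : (ℝ × ℝ) × ℝ → ℝ × ℝ)) (u, (0 : ℝ)) hnd' hasFDerivAt_fst
      have hff' : HasFDerivAt (fun p : (ℝ × ℝ) × ℝ => f p.1)
        ((fderiv ℝ f u).comp (ContinuousLinearMap.fst ℝ (ℝ × ℝ) ℝ)) (u, (0 : ℝ)) :=
        HasFDerivAt.comp (f := (Prod.fst : (ℝ × ℝ) × ℝ → ℝ × ℝ)) (u, (0 : ℝ)) (hfat u huU) hasFDerivAt_fst
      have hSd : HasFDerivAt S _ (u, (0 : ℝ)) := hff'.add (hsn.smul hfn)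
      rw [← hv] at hSd
      have hGd := ((rr.hasFDerivAt (x := (u, ((0 : ℝ), (1 : ℝ))))).mul (hNd.comp _ P.hasFDerivAt)).smul
        (hSd.comp _ P.hasFDerivAt)
      have hGd2 := hGd.fderiv
      change fderiv ℝ G _ = _ at hGd2
      have hN1 : N (u, 0) = 1 := by simp [hN, hS, hf1]
      have hS1 : S (u, 0) = f u := by simp [hS]
      have hr1 : rr (u, ((0 : ℝ), (1 : ℝ))) = 1 := rfl
      have hinjG : Function.Injective (fderiv ℝ G (u, ((0 : ℝ), (1 : ℝ)))) := by
        rw [injective_iff_map_eq_zero]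
        rintro ⟨w, c, d⟩ h0
        rw [hGd2] at h0
        have hPw : P (w, c, d) = (w, c) := rfl
        have hrw : rr (w, c, d) = d := rfl
        simp [hv, hN1, hS1, hr1, hPw, hrw] at h0
        have hc : c = 0 := by
          have := congrArg (fun x => inner ℝ (n u) x) h0
          simp [inner_add_right, inner_smul_right, hnf, hnd, hn0 u hu] at this
          exact this
        subst hc
        simp at h0
        have hm : (fderiv ℝ N (u, 0)) (w, 0) + d = 0 := by
          have := congrArg (fun x => inner ℝ (f u) x) h0
          simpa [inner_add_right, inner_smul_right, hff u huU, hf1] using this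
        rw [hm] at h0
        simp at h0
        have hw : w = 0 := hd u hu (h0.trans (map_zero _).symm)
        subst hw
        have h00 : ((0 : ℝ × ℝ), (0 : ℝ)) = 0 := rfl
        rw [h00, map_zero, zero_add] at hm
        subst hm
        rfl
      have hfr : Module.finrank ℝ V4 = Module.finrank ℝ E4 := by
        simp [V4, E4]
      refine ⟨(LinearEquiv.ofInjectiveOfFinrankEq (fderiv ℝ G (u, ((0 : ℝ), (1 : ℝ)))).toLinearMap hinjG hfr).toContinuousLinearEquiv, ?_⟩
      exact ContinuousLinearMap.ext fun v => rfl)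
  exact ⟨G, O, g, h1, h2, h4, h5, h6, h7, fun u _ => hGf u, fun v _ => hGn v⟩

end AuxChart

section AuxPlane

open Filter Topology ContDiff

abbrev E2 : Type := EuclideanSpace ℝ (Fin 2)

/-- The unit circle in `ℝ × ℝ`. -/
def circ2 : Set (ℝ × ℝ) := {u | u.1 ^ 2 + u.2 ^ 2 = 1}

lemma e2_norm_sq (w : E2) : ‖w‖ ^ 2 = w 0 ^ 2 + w 1 ^ 2 := by
  rw [EuclideanSpace.norm_sq_eq, Fin.sum_univ_two]
  simp

lemma aux_param (p q : E2) (hp : ‖p‖ = 1) (hq : ‖q‖ = 1) (hne : p ≠ q) :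
    ∃ c s k0 k1 : ℝ, c ^ 2 + s ^ 2 = 1 ∧ 0 < s ∧ k0 ^ 2 + k1 ^ 2 = 1 ∧
      p 0 = c * k0 - s * k1 ∧ p 1 = c * k1 + s * k0 ∧
      q 0 = c * k0 + s * k1 ∧ q 1 = c * k1 - s * k0 := by
  have hp2 := e2_norm_sq p
  have hq2 := e2_norm_sq q
  rw [hp] at hp2
  rw [hq] at hq2
  set dx := (p 0 - q 0) / 2 with hdx
  set dy := (p 1 - q 1) / 2 with hdy
  set m0 := (p 0 + q 0) / 2 with hm0
  set m1 := (p 1 + q 1) / 2 with hm1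
  have hpos : 0 < dx ^ 2 + dy ^ 2 := by
    by_contra hn
    have h1 : dx = 0 := by nlinarith [sq_nonneg dx, sq_nonneg dy]
    have h2 : dy = 0 := by nlinarith [sq_nonneg dx, sq_nonneg dy]
    apply hne
    ext i
    fin_cases i
    · show p 0 = q 0
      linarith
    · show p 1 = q 1
      linarith
  set s := Real.sqrt (dx ^ 2 + dy ^ 2) with hs
  have hs0 : 0 < s := Real.sqrt_pos.2 hpos
  have hss : s ^ 2 = dx ^ 2 + dy ^ 2 := Real.sq_sqrt hpos.le
  have hk0 : s * (dy / s) = dy := by field_simp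
  have hk1 : s * (-dx / s) = -dx := by field_simp
  set k0 := dy / s
  set k1 := -dx / s
  have hkk : k0 ^ 2 + k1 ^ 2 = 1 := by
    have : s ^ 2 * (k0 ^ 2 + k1 ^ 2) = s ^ 2 * 1 := by
      rw [mul_one]
      nth_rewrite 2 [hss]
      calc s ^ 2 * (k0 ^ 2 + k1 ^ 2) = (s * k0) ^ 2 + (s * k1) ^ 2 := by ring
        _ = _ := by rw [hk0, hk1]; ring
    exact mul_left_cancel₀ (by positivity) this
  have horth : m0 * k1 = m1 * k0 := by
    have h1 : m0 * dx + m1 * dy = 0 := by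
      simp only [hm0, hm1, hdx, hdy]; nlinarith
    have : s * (m0 * k1) = s * (m1 * k0) := by
      calc s * (m0 * k1) = m0 * (s * k1) := by ring
        _ = m1 * (s * k0) := by rw [hk0, hk1]; linarith
        _ = _ := by ring
    exact mul_left_cancel₀ hs0.ne' this
  have hc0 : (m0 * k0 + m1 * k1) * k0 = m0 := by
    calc (m0 * k0 + m1 * k1) * k0 = m0 * k0 ^ 2 + (m1 * k0) * k1 := by ring
      _ = m0 * (k0 ^ 2 + k1 ^ 2) := by rw [← horth]; ring
      _ = m0 := by rw [hkk, mul_one]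
  have hc1 : (m0 * k0 + m1 * k1) * k1 = m1 := by
    calc (m0 * k0 + m1 * k1) * k1 = (m0 * k1) * k0 + m1 * k1 ^ 2 := by ring
      _ = m1 * (k0 ^ 2 + k1 ^ 2) := by rw [horth]; ring
      _ = m1 := by rw [hkk, mul_one]
  refine ⟨m0 * k0 + m1 * k1, s, k0, k1, ?_, hs0, hkk, ?_, ?_, ?_, ?_⟩
  · have : (m0 * k0 + m1 * k1) ^ 2 = m0 ^ 2 + m1 ^ 2 := by
      calc (m0 * k0 + m1 * k1) ^ 2 = (m0 * k0 + m1 * k1) ^ 2 * (k0 ^ 2 + k1 ^ 2) := by rw [hkk, mul_one]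
        _ = ((m0 * k0 + m1 * k1) * k0) ^ 2 + ((m0 * k0 + m1 * k1) * k1) ^ 2 := by ring
        _ = _ := by rw [hc0, hc1]
    rw [this, hss]
    simp only [hm0, hm1, hdx, hdy]
    nlinarith
  · rw [hc0, hk1, hm0, hdx]; ring
  · rw [hc1, hk0, hm1, hdy]; ring
  · rw [hc0, hk1, hm0, hdx]; ring
  · rw [hc1, hk0, hm1, hdy]; ring

lemma alg1 (a c d s x : ℝ) (hd : d ≠ 0) (hs : s ≠ 0) (h : a - c * d = x * s ^ 2) :
    (a / d - c) / (s ^ 2 / d) = x := by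
  field_simp
  linear_combination h

lemma alg2 (a b d n : ℝ) (hd : d ≠ 0) (h : a ^ 2 + b ^ 2 = d ^ 2 - n) :
    (a / d) ^ 2 + (b / d) ^ 2 = 1 - n / d ^ 2 := by
  field_simp
  linear_combination h

lemma alg3 (a c d n : ℝ) (hd : d ≠ 0) (h : a + c * d = n) : a / d + c = n / d := by
  field_simp
  linear_combination h

lemma alg4 (s x y d a b : ℝ) (hd : d ≠ 0) (hs : s ≠ 0) :
    (s ^ 2 * x / d * a - s * (s * y / d) * b) / (s ^ 2 / d) = a * x - b * y := by
  field_simp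

lemma alg5 (s x y d a b : ℝ) (hd : d ≠ 0) (hs : s ≠ 0) :
    (s ^ 2 * x / d * a + s * (s * y / d) * b) / (s ^ 2 / d) = a * x + b * y := by
  field_simp

lemma aux_disc (p q : E2) (hp : ‖p‖ = 1) (hq : ‖q‖ = 1) (hne : p ≠ q) :
    ∃ (ψ : ℝ × ℝ → E2) (U0 : Set (ℝ × ℝ)), IsOpen U0 ∧ disc2 ⊆ U0 ∧ ContDiffOn ℝ ∞ ψ U0 ∧
      InjOn ψ disc2 ∧ (∀ u ∈ disc2, Function.Injective (fderiv ℝ ψ u)) ∧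
      (∀ u ∈ disc2, ψ u ∈ Metric.closedBall (0 : E2) 1) ∧
      ψ '' circ2 = Metric.sphere (0 : E2) 1 ∧ ψ (0, 1) = p ∧ ψ (0, -1) = q := by
  obtain ⟨c, s, k0, k1, hcs, hs, hk, hp0, hp1, hq0, hq1⟩ := aux_param p q hp hq hne
  set ψ : ℝ × ℝ → E2 := fun u => !₂[((u.1 + c) * k0 - s * u.2 * k1) / (1 + c * u.1),
    ((u.1 + c) * k1 + s * u.2 * k0) / (1 + c * u.1)] with hψ
  set X : E2 → ℝ := fun w => k0 * w 0 + k1 * w 1 with hX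
  set Y : E2 → ℝ := fun w => -k1 * w 0 + k0 * w 1 with hY
  set φ : E2 → ℝ × ℝ := fun w => ((X w - c) / (1 - c * X w), s * Y w / (1 - c * X w)) with hφ
  set U0 : Set (ℝ × ℝ) := {u | 0 < 1 + c * u.1} with hU0
  have hc1 : c ^ 2 < 1 := by nlinarith
  have hU0o : IsOpen U0 := isOpen_lt continuous_const (by fun_prop)
  have hcx : ∀ x : ℝ, x ^ 2 ≤ 1 → 0 < 1 + c * x := by
    intro x hx
    have h1 : |c * x| < 1 := by
      rw [← sq_lt_one_iff_abs_lt_one]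
      nlinarith [sq_nonneg c, sq_nonneg x]
    linarith [(abs_lt.1 h1).1]
  have hDU : disc2 ⊆ U0 := by
    intro u hu
    have hu : u.1 ^ 2 + u.2 ^ 2 ≤ 1 := hu
    exact hcx _ (by nlinarith [sq_nonneg u.2])
  have hψC : ContDiffOn ℝ ∞ ψ U0 := by
    rw [contDiffOn_euclidean]
    intro i
    have hne0 : ∀ u ∈ U0, 1 + c * u.1 ≠ 0 := fun u hu => ne_of_gt hu
    fin_cases i
    · show ContDiffOn ℝ ∞ (fun u : ℝ × ℝ => ((u.1 + c) * k0 - s * u.2 * k1) / (1 + c * u.1)) U0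
      exact ContDiffOn.div (by fun_prop) (by fun_prop) hne0
    · show ContDiffOn ℝ ∞ (fun u : ℝ × ℝ => ((u.1 + c) * k1 + s * u.2 * k0) / (1 + c * u.1)) U0
      exact ContDiffOn.div (by fun_prop) (by fun_prop) hne0
  have hψ0 : ∀ u, ψ u 0 = ((u.1 + c) * k0 - s * u.2 * k1) / (1 + c * u.1) := fun u => rfl
  have hψ1 : ∀ u, ψ u 1 = ((u.1 + c) * k1 + s * u.2 * k0) / (1 + c * u.1) := fun u => rfl
  have hXψ : ∀ u, X (ψ u) = (u.1 + c) / (1 + c * u.1) := by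
    intro u
    simp only [hX, hψ0, hψ1]
    rw [← mul_div_assoc, ← mul_div_assoc, ← add_div]
    congr 1
    linear_combination (u.1 + c) * hk
  have hYψ : ∀ u, Y (ψ u) = s * u.2 / (1 + c * u.1) := by
    intro u
    simp only [hY, hψ0, hψ1]
    rw [← mul_div_assoc, ← mul_div_assoc, ← add_div]
    congr 1
    linear_combination (s * u.2) * hk
  have hden : ∀ u ∈ U0, 1 - c * X (ψ u) = s ^ 2 / (1 + c * u.1) := by
    intro u hu
    have hu : 1 + c * u.1 ≠ 0 := ne_of_gt hu
    rw [hXψ]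
    field_simp
    linear_combination -hcs
  have hφψ : ∀ u ∈ U0, φ (ψ u) = u := by
    intro u hu
    have hd := hden u hu
    have hu : 1 + c * u.1 ≠ 0 := ne_of_gt hu
    have h2 : u.1 + c - c * (1 + c * u.1) = u.1 * s ^ 2 := by linear_combination -u.1 * hcs
    simp only [hφ]
    rw [hd, hXψ, hYψ]
    ext
    · exact alg1 _ _ _ _ _ hu hs.ne' h2
    · simp only
      field_simp
  have hnorm : ∀ u ∈ U0, ‖ψ u‖ ^ 2 = 1 - s ^ 2 * (1 - u.1 ^ 2 - u.2 ^ 2) / (1 + c * u.1) ^ 2 := by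
    intro u hu
    have hu : 1 + c * u.1 ≠ 0 := ne_of_gt hu
    rw [e2_norm_sq, hψ0, hψ1]
    apply alg2 _ _ _ _ hu
    linear_combination ((u.1 + c) ^ 2 + s ^ 2 * u.2 ^ 2) * hk + (1 - u.1 ^ 2) * hcs
  have hXC : ContDiff ℝ ∞ X := by
    simp only [hX]; fun_prop
  have hYC : ContDiff ℝ ∞ Y := by
    simp only [hY]; fun_prop
  refine ⟨ψ, U0, hU0o, hDU, hψC, ?_, ?_, ?_, ?_, ?_, ?_⟩
  · intro u hu v hv h
    rw [← hφψ u (hDU hu), h, hφψ v (hDU hv)]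
  · intro u hu
    have huU := hDU hu
    have hψd : DifferentiableAt ℝ ψ u :=
      (hψC.contDiffAt (hU0o.mem_nhds huU)).differentiableAt (by simp)
    have hne0 : 1 - c * X (ψ u) ≠ 0 := by
      have h1 : 0 < 1 + c * u.1 := huU
      rw [hden u huU]; positivity
    have hφd : DifferentiableAt ℝ φ (ψ u) := by
      have h1 : DifferentiableAt ℝ X (ψ u) := hXC.contDiffAt.differentiableAt (by simp)
      have h2 : DifferentiableAt ℝ Y (ψ u) := hYC.contDiffAt.differentiableAt (by simp)
      have h3 : DifferentiableAt ℝ (fun w => 1 - c * X w) (ψ u) :=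
        (differentiableAt_const _).sub (h1.const_mul c)
      have h4 : DifferentiableAt ℝ (fun w => (X w - c) / (1 - c * X w)) (ψ u) :=
        (ContDiffAt.div (hXC.contDiffAt.sub contDiffAt_const)
          (contDiffAt_const.sub (contDiffAt_const.mul hXC.contDiffAt)) hne0).differentiableAt (by simp)
      have h5 : DifferentiableAt ℝ (fun w => s * Y w / (1 - c * X w)) (ψ u) :=
        (ContDiffAt.div (contDiffAt_const.mul hYC.contDiffAt)
          (contDiffAt_const.sub (contDiffAt_const.mul hXC.contDiffAt)) hne0).differentiableAt (by simp)
      exact h4.prodMk h5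
    have h1 : HasFDerivAt (φ ∘ ψ) ((fderiv ℝ φ (ψ u)).comp (fderiv ℝ ψ u)) u :=
      hφd.hasFDerivAt.comp u hψd.hasFDerivAt
    have h2 : HasFDerivAt (φ ∘ ψ) (ContinuousLinearMap.id ℝ (ℝ × ℝ)) u := by
      refine (hasFDerivAt_id u).congr_of_eventuallyEq ?_
      filter_upwards [hU0o.mem_nhds huU] with v hv using hφψ v hv
    have h3 := h1.unique h2
    intro a b hab
    have h4 := congrArg (fun L => L a) h3
    have h5 := congrArg (fun L => L b) h3
    simp only [ContinuousLinearMap.comp_apply, ContinuousLinearMap.id_apply] at h4 h5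
    rw [← h4, hab, h5]
  · intro u hu
    have h1 := hnorm u (hDU hu)
    have hu' : u.1 ^ 2 + u.2 ^ 2 ≤ 1 := hu
    have h2 : 0 ≤ s ^ 2 * (1 - u.1 ^ 2 - u.2 ^ 2) / (1 + c * u.1) ^ 2 := by
      apply div_nonneg _ (sq_nonneg _)
      exact mul_nonneg (sq_nonneg _) (by linarith)
    rw [mem_closedBall_zero_iff]
    have h3 := norm_nonneg (ψ u)
    nlinarith
  · apply Subset.antisymm
    · rintro _ ⟨u, hu, rfl⟩
      have hu' : u.1 ^ 2 + u.2 ^ 2 = 1 := hu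
      have h1 := hnorm u (hDU (le_of_eq hu'))
      rw [show 1 - u.1 ^ 2 - u.2 ^ 2 = 0 by linarith] at h1
      rw [mem_sphere_zero_iff_norm]
      have h3 := norm_nonneg (ψ u)
      have h4 : ‖ψ u‖ ^ 2 = 1 := by rw [h1]; ring
      nlinarith
    · intro w hw
      rw [mem_sphere_zero_iff_norm] at hw
      have hw2 := e2_norm_sq w
      rw [hw] at hw2
      have hXY : X w ^ 2 + Y w ^ 2 = 1 := by
        simp only [hX, hY]
        linear_combination (w 0 ^ 2 + w 1 ^ 2) * hk - hw2
      have hpos : 0 < 1 - c * X w := by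
        have := hcx (-X w) (by nlinarith [sq_nonneg (Y w)])
        linarith
      have hne0 := hpos.ne'
      have hφ1 : (φ w).1 = (X w - c) / (1 - c * X w) := rfl
      have hφ2 : (φ w).2 = s * Y w / (1 - c * X w) := rfl
      have h1 : 1 + c * (φ w).1 = s ^ 2 / (1 - c * X w) := by
        rw [hφ1]; field_simp; linear_combination -hcs
      have hw0 : w 0 = k0 * X w - k1 * Y w := by
        simp only [hX, hY]; linear_combination -(w 0) * hk
      have hw1 : w 1 = k1 * X w + k0 * Y w := by
        simp only [hX, hY]; linear_combination -(w 1) * hk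
      refine ⟨φ w, ?_, ?_⟩
      · show (φ w).1 ^ 2 + (φ w).2 ^ 2 = 1
        rw [hφ1, hφ2]
        rw [alg2 _ _ _ 0 hne0, zero_div, sub_zero]
        linear_combination s ^ 2 * hXY + (1 - X w ^ 2) * hcs
      · have h2 : X w - c + c * (1 - c * X w) = s ^ 2 * X w := by linear_combination -(X w) * hcs
        have e1 : ((φ w).1 + c) = s ^ 2 * X w / (1 - c * X w) := by
          rw [hφ1]; exact alg3 _ _ _ _ hne0 h2
        ext i
        fin_cases i
        · show ψ (φ w) 0 = w 0
          rw [hψ0, h1, e1, hφ2, hw0]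
          exact alg4 _ _ _ _ _ _ hne0 hs.ne'
        · show ψ (φ w) 1 = w 1
          rw [hψ1, h1, e1, hφ2, hw1]
          exact alg5 _ _ _ _ _ _ hne0 hs.ne'
  · ext i
    fin_cases i
    · show ψ (0, 1) 0 = p 0
      rw [hψ0, hp0]; simp
    · show ψ (0, 1) 1 = p 1
      rw [hψ1, hp1]; simp
  · ext i
    fin_cases i
    · show ψ (0, -1) 0 = q 0
      rw [hψ0, hq0]; simp
    · show ψ (0, -1) 1 = q 1
      rw [hψ1, hq1]; simp; ring

lemma aux_rot (O : Set V4) (hO : IsOpen O) (hD : disc2 ×ˢ {((0 : ℝ), (1 : ℝ))} ⊆ O) :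
    ∃ (C : Set V4) (E : ℝ → V4 → V4), IsCompact C ∧ C ⊆ O ∧
      ContDiff ℝ ∞ (fun p : ℝ × V4 => E p.1 p.2) ∧ (∀ v, E 0 v = v) ∧
      (∀ t, ∀ v ∉ C, E t v = v) ∧ (∀ t v, E (-t) (E t v) = v) ∧
      (∀ t v, (E t v).2.2 = v.2.2) ∧
      (∀ t y, E t ((0, y), (0, 1)) = ((0, y), (0, 1))) ∧
      (∀ x y, x ^ 2 + y ^ 2 = 1 → E 1 ((x, y), (0, 1)) = ((-x, y), (0, 1))) := by
  obtain ⟨u, v, hu, hv, hDu, h0v, huv⟩ :=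
    generalized_tube_lemma isCompact_disc2 isCompact_singleton hO hD
  obtain ⟨δ, hδ, hδu⟩ := isCompact_disc2.exists_cthickening_subset_open hu hDu
  obtain ⟨η, hη, hηv⟩ := Metric.isOpen_iff.1 hv _ (h0v rfl)
  set ε := η / (2 * (1 + δ)) with hε
  have hε0 : 0 < ε := by positivity
  have hεη : ε * (1 + δ) = η / 2 := by rw [hε]; field_simp
  set R := (1 + δ) ^ 2 with hR
  have hR1 : 1 < R := by nlinarith
  set Q : V4 → ℝ := fun v => v.1.1 ^ 2 + v.1.2 ^ 2 + (v.2.1 / ε) ^ 2 + ((v.2.2 - 1) / ε) ^ 2 with hQ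
  have hQC : ContDiff ℝ ∞ Q := by simp only [hQ]; fun_prop
  set θ : ℝ → V4 → ℝ := fun t v => t * (Real.pi * Real.smoothTransition ((R - Q v) / (R - 1))) with hθ
  have hθC : ContDiff ℝ ∞ (fun p : ℝ × V4 => θ p.1 p.2) := by
    have h1 : ContDiff ℝ ∞ (fun p : ℝ × V4 => Real.smoothTransition ((R - Q p.2) / (R - 1))) :=
      Real.smoothTransition.contDiff.comp
        ((contDiff_const.sub (hQC.comp contDiff_snd)).div_const _)
    exact contDiff_fst.mul (contDiff_const.mul h1)
  set E : ℝ → V4 → V4 := fun t v =>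
    ((v.1.1 * Real.cos (θ t v) - v.2.1 / ε * Real.sin (θ t v), v.1.2),
      (ε * v.1.1 * Real.sin (θ t v) + v.2.1 * Real.cos (θ t v), v.2.2)) with hE
  have hEC : ContDiff ℝ ∞ (fun p : ℝ × V4 => E p.1 p.2) := by
    have hc := Real.contDiff_cos.comp hθC
    have hs := Real.contDiff_sin.comp hθC
    simp only [Function.comp_def] at hc hs
    simp only [hE]
    fun_prop
  have hθ0 : ∀ t v, θ t v = 0 → E t v = v := by
    intro t v h
    simp [hE, h]
  have hQE : ∀ t v, Q (E t v) = Q v := by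
    intro t v
    have hcs := Real.sin_sq_add_cos_sq (θ t v)
    simp only [hE, hQ]
    field_simp
    linear_combination (ε ^ 2 * v.1.1 ^ 2 + v.2.1 ^ 2) * hcs
  have hθE : ∀ t v, θ (-t) (E t v) = - θ t v := by
    intro t v
    simp only [hθ, hQE]; ring
  refine ⟨{v | Q v ≤ R}, E, ?_, ?_, hEC, ?_, ?_, ?_, ?_, ?_, ?_⟩
  · refine Metric.isCompact_of_isClosed_isBounded (isClosed_le hQC.continuous continuous_const) ?_
    refine (Metric.isBounded_closedBall (x := (0 : V4)) (r := 1 + δ + ε * (1 + δ) + 1)).subset ?_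
    intro w hw
    have hw : Q w ≤ R := hw
    simp only [hQ, hR] at hw
    have h1 := sq_nonneg w.1.1
    have h2 := sq_nonneg w.1.2
    have h3 := sq_nonneg (w.2.1 / ε)
    have h4 := sq_nonneg ((w.2.2 - 1) / ε)
    have hδ' : 0 ≤ 1 + δ := by positivity
    have b1 : |w.1.1| ≤ 1 + δ := abs_le_of_sq_le_sq (by linarith) hδ'
    have b2 : |w.1.2| ≤ 1 + δ := abs_le_of_sq_le_sq (by linarith) hδ'
    have b3 : |w.2.1 / ε| ≤ 1 + δ := abs_le_of_sq_le_sq (by linarith) hδ'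
    have b4 : |(w.2.2 - 1) / ε| ≤ 1 + δ := abs_le_of_sq_le_sq (by linarith) hδ'
    rw [abs_div, abs_of_pos hε0, div_le_iff₀ hε0] at b3 b4
    have b5 : |w.2.2| ≤ |w.2.2 - 1| + 1 := by
      have := abs_add_le (w.2.2 - 1) 1
      simpa using this
    have hp : 0 < ε * (1 + δ) := by positivity
    rw [mem_closedBall_zero_iff, Prod.norm_def, Prod.norm_def, Prod.norm_def]
    simp only [Real.norm_eq_abs]
    refine max_le (max_le ?_ ?_) (max_le ?_ ?_) <;> nlinarith
  · intro w hw
    have hw : Q w ≤ R := hw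
    simp only [hQ, hR] at hw
    have h1 := sq_nonneg w.1.1
    have h2 := sq_nonneg w.1.2
    have h3 := sq_nonneg (w.2.1 / ε)
    have h4 := sq_nonneg ((w.2.2 - 1) / ε)
    have hδ' : 0 ≤ 1 + δ := by positivity
    have b1 : |w.1.1| ≤ 1 + δ := abs_le_of_sq_le_sq (by linarith) hδ'
    have b2 : |w.1.2| ≤ 1 + δ := abs_le_of_sq_le_sq (by linarith) hδ'
    have b3 : |w.2.1 / ε| ≤ 1 + δ := abs_le_of_sq_le_sq (by linarith) hδ'
    have b4 : |(w.2.2 - 1) / ε| ≤ 1 + δ := abs_le_of_sq_le_sq (by linarith) hδ'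
    rw [abs_div, abs_of_pos hε0, div_le_iff₀ hε0] at b3 b4
    apply huv
    refine ⟨hδu ?_, hηv ?_⟩
    · refine Metric.mem_cthickening_of_dist_le w.1 ((1 + δ)⁻¹ • w.1) δ _ ?_ ?_
      · show ((1 + δ)⁻¹ * w.1.1) ^ 2 + ((1 + δ)⁻¹ * w.1.2) ^ 2 ≤ 1
        rw [mul_pow, mul_pow, ← mul_add, inv_pow, inv_mul_le_iff₀ (by positivity)]
        linarith
      · have e1 : w.1 - (1 + δ)⁻¹ • w.1 = (δ / (1 + δ)) • w.1 := by
          have : (1 : ℝ) - (1 + δ)⁻¹ = δ / (1 + δ) := by field_simp; ring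
          rw [← this, sub_smul, one_smul]
        have e2 : ‖w.1‖ ≤ 1 + δ := by
          rw [Prod.norm_def]
          exact max_le b1 b2
        rw [dist_eq_norm, e1, norm_smul, Real.norm_of_nonneg (by positivity)]
        calc δ / (1 + δ) * ‖w.1‖ ≤ δ / (1 + δ) * (1 + δ) := by gcongr
          _ = δ := by field_simp
    · rw [mem_ball, Prod.dist_eq, Real.dist_eq, Real.dist_eq]
      refine max_lt ?_ ?_
      · simp only [sub_zero]; nlinarith
      · simp only; nlinarith
  · intro v
    exact hθ0 0 v (by simp [hθ])
  · intro t v hv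
    have hv : ¬ (Q v ≤ R) := hv
    apply hθ0
    simp only [hθ]
    rw [Real.smoothTransition.zero_of_nonpos]
    · simp
    · exact div_nonpos_of_nonpos_of_nonneg (by linarith) (by linarith)
  · intro t v
    have hcs := Real.sin_sq_add_cos_sq (θ t v)
    have h1 : E (-t) (E t v) = (((E t v).1.1 * Real.cos (θ t v) + (E t v).2.1 / ε * Real.sin (θ t v), v.1.2),
      (-(ε * (E t v).1.1 * Real.sin (θ t v)) + (E t v).2.1 * Real.cos (θ t v), v.2.2)) := by
      have : E (-t) (E t v) = (((E t v).1.1 * Real.cos (θ (-t) (E t v)) - (E t v).2.1 / ε * Real.sin (θ (-t) (E t v)), v.1.2),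
      (ε * (E t v).1.1 * Real.sin (θ (-t) (E t v)) + (E t v).2.1 * Real.cos (θ (-t) (E t v)), v.2.2)) := rfl
      rw [this, hθE, Real.cos_neg, Real.sin_neg]
      simp only [mul_neg, sub_neg_eq_add]
    rw [h1]
    have e1 : (E t v).1.1 = v.1.1 * Real.cos (θ t v) - v.2.1 / ε * Real.sin (θ t v) := rfl
    have e2 : (E t v).2.1 = ε * v.1.1 * Real.sin (θ t v) + v.2.1 * Real.cos (θ t v) := rfl
    rw [e1, e2]
    ext
    · simp only
      field_simp
      linear_combination (ε * v.1.1) * hcs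
    · rfl
    · simp only
      field_simp
      linear_combination (v.2.1) * hcs
    · rfl
  · intro t v; rfl
  · intro t y
    simp [hE]
  · intro x y hxy
    have h1 : θ 1 ((x, y), (0, 1)) = Real.pi := by
      simp only [hθ, hQ]
      rw [Real.smoothTransition.one_of_one_le]
      · simp
      · rw [one_le_div (by linarith)]
        simp [hxy]
    simp [hE, h1]

lemma aux_sign (h : ℝ → ℝ) (hc : ContinuousOn h (Ioo 0 1)) (h0 : ∀ t ∈ Ioo (0 : ℝ) 1, h t ≠ 0) :
    ∃ σ : ℝ, σ ^ 2 = 1 ∧ ∀ t ∈ Ioo (0 : ℝ) 1, 0 < σ * h t := by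
  have hpre : IsPreconnected (h '' Ioo 0 1) := isPreconnected_Ioo.image h hc
  have hord := hpre.ordConnected
  by_cases hpos : ∀ t ∈ Ioo (0 : ℝ) 1, 0 < h t
  · exact ⟨1, by norm_num, fun t ht => by simpa using hpos t ht⟩
  · push Not at hpos
    obtain ⟨t0, ht0, hn⟩ := hpos
    refine ⟨-1, by norm_num, fun t ht => ?_⟩
    by_contra hcon
    have h1 : 0 ≤ h t := by linarith
    obtain ⟨s, hs, hs0⟩ := hord.out (mem_image_of_mem h ht0) (mem_image_of_mem h ht)
      (⟨hn, h1⟩ : (0 : ℝ) ∈ Icc (h t0) (h t))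
    exact h0 s hs hs0

lemma aux_arcs {T : Type*} [TopologicalSpace T] (f : ℝ × ℝ → T) (X : T → ℝ)
    (hX : ContinuousOn X (f '' circ2)) (hXf : ∀ u ∈ circ2, X (f u) = u.1)
    (γ γ' : ℝ → T) (hγ : Continuous γ) (hγ' : Continuous γ')
    (hinj : InjOn γ (Icc 0 1)) (hinj' : InjOn γ' (Icc 0 1))
    (hun : f '' circ2 = γ '' Icc 0 1 ∪ γ' '' Icc 0 1)
    (he : ({γ 0, γ 1} : Set T) = {f (0, 1), f (0, -1)})
    (he' : ({γ' 0, γ' 1} : Set T) = {f (0, 1), f (0, -1)}) :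
    ∃ σ : ℝ, σ ^ 2 = 1 ∧ γ '' Icc 0 1 = f '' {u | u ∈ circ2 ∧ 0 ≤ σ * u.1} ∧
      γ' '' Icc 0 1 = f '' {u | u ∈ circ2 ∧ 0 ≤ -σ * u.1} := by
  have hmid : ∀ δ : ℝ → T, Continuous δ → InjOn δ (Icc 0 1) → δ '' Icc 0 1 ⊆ f '' circ2 →
      ({δ 0, δ 1} : Set T) = {f (0, 1), f (0, -1)} →
      ∃ σ : ℝ, σ ^ 2 = 1 ∧ ∀ t ∈ Ioo (0 : ℝ) 1, 0 < σ * X (δ t) := by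
    intro δ hδ hi hs hends
    refine aux_sign (fun t => X (δ t)) (hX.comp hδ.continuousOn
      (fun t ht => hs (mem_image_of_mem δ (Ioo_subset_Icc_self ht)))) ?_
    intro t ht h0
    obtain ⟨u, hu, hut⟩ := hs (mem_image_of_mem δ (Ioo_subset_Icc_self ht))
    simp only [← hut, hXf u hu] at h0
    have hu2 : u.2 = 1 ∨ u.2 = -1 := by
      have : u.1 ^ 2 + u.2 ^ 2 = 1 := hu
      rw [h0] at this
      exact by
            simpa using sq_eq_sq_iff_eq_or_eq_neg.1 (show u.2 ^ 2 = 1 ^ 2 by linarith)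
    have hmem : δ t ∈ ({δ 0, δ 1} : Set T) := by
      rw [hends, ← hut]
      rcases hu2 with h | h
      · left; congr 1; exact Prod.ext h0 h
      · right; show f u = _; congr 1; exact Prod.ext h0 h
    rcases hmem with h | h
    · have := hi (Ioo_subset_Icc_self ht) ⟨le_refl _, zero_le_one⟩ h
      exact ht.1.ne' this
    · have := hi (Ioo_subset_Icc_self ht) ⟨zero_le_one, le_refl _⟩ h
      exact ht.2.ne this
  have hX1 : X (f (0, 1)) = 0 := hXf (0, 1) (by simp [circ2])
  have hX2 : X (f (0, -1)) = 0 := hXf (0, -1) (by simp [circ2])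
  have hend0 : ∀ δ : ℝ → T, ({δ 0, δ 1} : Set T) = {f (0, 1), f (0, -1)} →
      X (δ 0) = 0 ∧ X (δ 1) = 0 := by
    intro δ hends
    have h0 : δ 0 ∈ ({f (0, 1), f (0, -1)} : Set T) := by rw [← hends]; simp
    have h1 : δ 1 ∈ ({f (0, 1), f (0, -1)} : Set T) := by rw [← hends]; simp
    constructor
    · rcases h0 with h | h <;> rw [h] <;> assumption
    · rcases h1 with h | h <;> rw [h] <;> assumption
  have hclosed : ∀ δ : ℝ → T, ({δ 0, δ 1} : Set T) = {f (0, 1), f (0, -1)} → ∀ σ : ℝ,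
      (∀ t ∈ Ioo (0 : ℝ) 1, 0 < σ * X (δ t)) → ∀ t ∈ Icc (0 : ℝ) 1, 0 ≤ σ * X (δ t) := by
    intro δ hends σ hσ t ht
    rcases eq_or_lt_of_le ht.1 with h | h
    · rw [← h, (hend0 δ hends).1]; simp
    rcases eq_or_lt_of_le ht.2 with h' | h'
    · rw [h', (hend0 δ hends).2]; simp
    exact (hσ t ⟨h, h'⟩).le
  obtain ⟨σ, hσ1, hσ⟩ := hmid γ hγ hinj (by rw [hun]; exact subset_union_left) he
  obtain ⟨σ', hσ1', hσ'⟩ := hmid γ' hγ' hinj' (by rw [hun]; exact subset_union_right) he'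
  have hc := hclosed γ he σ hσ
  have hc' := hclosed γ' he' σ' hσ'
  have hopp : σ' = -σ := by
    rcases eq_or_eq_neg_of_sq_eq_sq σ' σ (by rw [hσ1, hσ1']) with h | h
    · exfalso
      subst h
      have hmem : ((-σ', 0) : ℝ × ℝ) ∈ circ2 := by simp [circ2, hσ1]
      have h1 : f (-σ', 0) ∈ f '' circ2 := mem_image_of_mem f hmem
      have h2 := hXf _ hmem
      rw [hun] at h1
      rcases h1 with ⟨t, ht, h⟩ | ⟨t, ht, h⟩
      · have := hc t ht
        rw [h, h2] at this
        simp only at this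
        nlinarith
      · have := hc' t ht
        rw [h, h2] at this
        simp only at this
        nlinarith
    · exact h
  subst hopp
  have key : ∀ (δ δ' : ℝ → T) (τ : ℝ), τ ^ 2 = 1 → f '' circ2 = δ '' Icc 0 1 ∪ δ' '' Icc 0 1 →
      ({δ 0, δ 1} : Set T) = {f (0, 1), f (0, -1)} →
      (∀ t ∈ Icc (0 : ℝ) 1, 0 ≤ τ * X (δ t)) → (∀ t ∈ Icc (0 : ℝ) 1, 0 ≤ -τ * X (δ' t)) →
      δ '' Icc 0 1 = f '' {u | u ∈ circ2 ∧ 0 ≤ τ * u.1} := by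
    intro δ δ' τ hτ hU hends hp hn
    apply Subset.antisymm
    · rintro _ ⟨t, ht, rfl⟩
      have h1 : δ t ∈ f '' circ2 := by rw [hU]; exact Or.inl (mem_image_of_mem δ ht)
      obtain ⟨u, hu, hut⟩ := h1
      refine ⟨u, ⟨hu, ?_⟩, hut⟩
      rw [← hXf u hu, hut]
      exact hp t ht
    · rintro _ ⟨u, ⟨hu, hu0⟩, rfl⟩
      have h1 : f u ∈ f '' circ2 := mem_image_of_mem f hu
      rw [hU] at h1
      rcases h1 with h1 | ⟨t, ht, h⟩
      · exact h1
      · have h2 := hn t ht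
        rw [h, hXf u hu] at h2
        have h3 : u.1 = 0 := by
          have : τ * u.1 = 0 := by linarith
          rcases mul_eq_zero.1 this with h | h
          · rw [h] at hτ; norm_num at hτ
          · exact h
        have hu2 : u.2 = 1 ∨ u.2 = -1 := by
          have : u.1 ^ 2 + u.2 ^ 2 = 1 := hu
          rw [h3] at this
          exact by
            simpa using sq_eq_sq_iff_eq_or_eq_neg.1 (show u.2 ^ 2 = 1 ^ 2 by linarith)
        have hmem : f u ∈ ({δ 0, δ 1} : Set T) := by
          rw [hends]
          rcases hu2 with h | h
          · left; congr 1; exact Prod.ext h3 h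
          · right; show f u = _; congr 1; exact Prod.ext h3 h
        rcases hmem with h | h
        · exact ⟨0, ⟨le_refl _, zero_le_one⟩, h.symm⟩
        · exact ⟨1, ⟨zero_le_one, le_refl _⟩, h.symm⟩
  refine ⟨σ, hσ1, key γ γ' σ hσ1 hun he hc hc', key γ' γ (-σ) hσ1' (by rw [hun, union_comm]) he' hc' ?_⟩
  simpa using hc

end AuxPlane

section AuxFinal

open Filter Topology ContDiff

lemma fact_finrank_E4 : Fact (Module.finrank ℝ E4 = 3 + 1) := ⟨by simp⟩

lemma contMDiff_coe_S3 : ContMDiff (𝓡 3) 𝓘(ℝ, E4) (⊤ : ℕ∞) ((↑) : S3 → E4) := by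
  haveI := fact_finrank_E4
  exact contMDiff_coe_sphere

lemma injective_mfderiv_coe_S3 (v : S3) :
    Function.Injective (mfderiv (𝓡 3) 𝓘(ℝ, E4) ((↑) : S3 → E4) v) := by
  haveI := fact_finrank_E4
  exact injective_mvfderiv_subtypeVal_sphere v

lemma aux_isotopy (H : ℝ → E4 → E4) (hH : ContDiff ℝ ∞ fun p : ℝ × E4 => H p.1 p.2)
    (hH0 : ∀ x, H 0 x = x) (hHinv : ∀ t x, H (-t) (H t x) = x)
    (hHn : ∀ t x, ‖H t x‖ = ‖x‖) :
    ∃ h : AmbientIsotopy, ∀ lam x, ((h.toFun lam x : S3) : E4) = H lam x := by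
  haveI := fact_finrank_E4
  have hmem : ∀ t (x : S3), H t x ∈ Metric.sphere (0 : E4) 1 := by
    intro t x
    rw [mem_sphere_zero_iff_norm, hHn]
    exact mem_sphere_zero_iff_norm.1 x.2
  have hHt : ∀ t, ContMDiff (𝓡 3) (𝓡 3) (⊤ : ℕ∞) (fun x : S3 => (⟨H t x, hmem t x⟩ : S3)) := by
    intro t
    have h1 : ContDiff ℝ ∞ (fun x : E4 => H t x) := hH.comp (contDiff_const.prodMk contDiff_id)
    have h2 : ContMDiff (𝓡 3) 𝓘(ℝ, E4) (⊤ : ℕ∞) (fun x : S3 => H t x) :=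
      h1.contMDiff.comp contMDiff_coe_sphere
    exact h2.codRestrict_sphere (hmem t)
  have hHinv' : ∀ t x, H t (H (-t) x) = x := by
    intro t x
    have := hHinv (-t) x
    rwa [neg_neg] at this
  refine ⟨⟨fun lam x => ⟨H lam x, hmem lam x⟩, ?_, ?_, ?_⟩, fun lam x => rfl⟩
  · have h2 : ContMDiff ((𝓡∂ 1).prod (𝓡 3)) 𝓘(ℝ, ℝ × E4) (⊤ : ℕ∞)
        (fun p : Set.Icc (0 : ℝ) 1 × S3 => ((p.1 : ℝ), (p.2 : E4))) :=
      (contMDiff_subtypeVal_Icc.comp contMDiff_fst).prodMk_space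
        (contMDiff_coe_S3.comp contMDiff_snd)
    have h3 : ContMDiff ((𝓡∂ 1).prod (𝓡 3)) 𝓘(ℝ, E4) (⊤ : ℕ∞)
        (fun p : Set.Icc (0 : ℝ) 1 × S3 => H p.1 p.2) := hH.contMDiff.comp h2
    exact h3.codRestrict_sphere (fun p => hmem p.1 p.2)
  · intro x
    exact Subtype.ext (hH0 x)
  · intro lam
    refine ⟨⟨⟨fun x => ⟨H lam x, hmem lam x⟩, fun x => ⟨H (-lam) x, hmem (-lam) x⟩, ?_, ?_⟩,
      hHt lam, hHt (-lam)⟩, fun x => rfl⟩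
    · intro x; exact Subtype.ext (hHinv _ _)
    · intro x; exact Subtype.ext (hHinv' _ _)

end AuxFinal

/-- Let `α` and `α'` be smoothly embedded arcs in `S³` with the same
pair of distinct endpoints and disjoint interiors, such that the circle `α ∪ α'` is
unknotted, i.e. it bounds a smoothly embedded disc in `S³`. Then there is a smooth
ambient isotopy of `S³` fixing the two endpoints throughout and sending `α` to `α'`. -/
theorem arcs_bounding_disc_ambient_isotopic_rel_endpoints
    (a a' : EmbeddedArc)
    (hne : a.emb 0 ≠ a.emb 1)
    (hends : ({a.emb 0, a.emb 1} : Set S3) = {a'.emb 0, a'.emb 1})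
    (hdisj : a.interior ∩ a'.interior = ∅)
    (hunknot : ∃ D : EmbeddedDisc, D.bdry = a.carrier ∪ a'.carrier) :
    ∃ h : AmbientIsotopy,
      (∀ lam : Set.Icc (0:ℝ) 1,
        h.toFun lam (a.emb 0) = a.emb 0 ∧ h.toFun lam (a.emb 1) = a.emb 1) ∧
      h.Sends a.carrier a'.carrier := by
  obtain ⟨D, hD⟩ := hunknot
  have h0b : a.emb 0 ∈ D.bdry := by
    rw [hD]; exact Or.inl ⟨0, ⟨le_refl _, zero_le_one⟩, rfl⟩
  have h1b : a.emb 1 ∈ D.bdry := by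
    rw [hD]; exact Or.inl ⟨1, ⟨zero_le_one, le_refl _⟩, rfl⟩
  obtain ⟨p, hp, hpa⟩ := h0b
  obtain ⟨q, hq, hqa⟩ := h1b
  have hpq : p ≠ q := by
    rintro rfl
    exact hne (hpa.symm.trans hqa)
  obtain ⟨ψ, U0, hU0, hDU, hψC, hψinj, hψd, hψball, hψcirc, hψp, hψq⟩ :=
    aux_disc p q (mem_sphere_zero_iff_norm.1 hp) (mem_sphere_zero_iff_norm.1 hq) hpq
  set e : E2 → E4 := fun x => (D.emb x : E4) with he
  have heM : ContMDiff 𝓘(ℝ, E2) 𝓘(ℝ, E4) (⊤ : ℕ∞) e := contMDiff_coe_S3.comp D.smooth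
  have heC : ContDiff ℝ (⊤ : ℕ∞) e := contMDiff_iff_contDiff.1 heM
  have hed : ∀ x ∈ Metric.closedBall (0 : E2) 1, Function.Injective (fderiv ℝ e x) := by
    intro x hx
    have h1 : mfderiv 𝓘(ℝ, E2) 𝓘(ℝ, E4) e x =
        (mfderiv (𝓡 3) 𝓘(ℝ, E4) ((↑) : S3 → E4) (D.emb x)).comp
          (mfderiv 𝓘(ℝ, E2) (𝓡 3) D.emb x) :=
      mfderiv_comp x (contMDiff_coe_S3.mdifferentiableAt (by simp))
        (D.smooth.mdifferentiableAt (by simp))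
    rw [← mfderiv_eq_fderiv, h1]
    exact (injective_mfderiv_coe_S3 (D.emb x)).comp (D.immersion x hx)
  have hDinj : InjOn D.emb (Metric.closedBall (0 : E2) 1) :=
    Set.injOn_iff_injective.2 D.isEmbedding.injective
  have heinj : InjOn e (Metric.closedBall (0 : E2) 1) :=
    fun x hx y hy h => hDinj hx hy (Subtype.ext h)
  have hfinj : InjOn (e ∘ ψ) disc2 := heinj.comp hψinj hψball
  have hfd : ∀ u ∈ disc2, Function.Injective (fderiv ℝ (e ∘ ψ) u) := by
    intro u hu
    rw [fderiv_comp u (heC.contDiffAt.differentiableAt (by simp))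
      ((hψC.contDiffAt (hU0.mem_nhds (hDU hu))).differentiableAt (by simp))]
    exact (hed _ (hψball u hu)).comp (hψd u hu)
  obtain ⟨G, O, g, hO, hDO, hG, hGO, hg, hgG, hGf, hGn⟩ := aux_chart (e ∘ ψ) U0 hU0 hDU
    (heC.comp_contDiffOn hψC) (fun u => mem_sphere_zero_iff_norm.1 (D.emb (ψ u)).2) hfinj hfd
  obtain ⟨C, E, hC, hCO, hE, hE0, hEC, hEinv, hE2, hEfix, hE1⟩ := aux_rot O hO hDO
  obtain ⟨H, hH, hH0, hHinv, hHG, hHoff, hEO⟩ :=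
    aux_transport G g O C hC hCO hG hGO hg hgG E hE hE0 hEC hEinv
  have hHn : ∀ t x, ‖H t x‖ = ‖x‖ := by
    intro t x
    by_cases hx : x ∈ G '' O
    · obtain ⟨v, hv, rfl⟩ := hx
      rw [hHG t v hv, hGn _ (hEO t v hv), hGn v hv, hE2]
    · rw [hHoff t x hx]
  obtain ⟨h, hh⟩ := aux_isotopy H hH hH0 hHinv hHn
  have hcd : circ2 ⊆ disc2 := fun u hu => le_of_eq hu
  have hmemO : ∀ u ∈ disc2, ((u, ((0 : ℝ), (1 : ℝ))) : V4) ∈ O := fun u hu => hDO ⟨hu, rfl⟩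
  have hN : ((0, 1) : ℝ × ℝ) ∈ circ2 := by simp [circ2]
  have hS : ((0, -1) : ℝ × ℝ) ∈ circ2 := by simp [circ2]
  have hfix : ∀ (lam : Set.Icc (0 : ℝ) 1) (y : ℝ), ((0, y) : ℝ × ℝ) ∈ circ2 →
      h.toFun lam (D.emb (ψ (0, y))) = D.emb (ψ (0, y)) := by
    intro lam y hy
    apply Subtype.ext
    rw [hh]
    have h1 : ((D.emb (ψ (0, y)) : S3) : E4) = G ((0, y), (0, 1)) := (hGf _ (hcd hy)).symm
    rw [h1, hHG _ _ (hmemO _ (hcd hy)), hEfix]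
  have hrefl : ∀ u ∈ circ2, h.toFun 1 (D.emb (ψ u)) = D.emb (ψ (-u.1, u.2)) := by
    intro u hu
    have hu2 : ((-u.1, u.2) : ℝ × ℝ) ∈ circ2 := by
      have : u.1 ^ 2 + u.2 ^ 2 = 1 := hu
      show (-u.1) ^ 2 + u.2 ^ 2 = 1
      linarith [neg_sq u.1]
    apply Subtype.ext
    rw [hh]
    have h1 : ((D.emb (ψ u) : S3) : E4) = G ((u.1, u.2), (0, 1)) := (hGf _ (hcd hu)).symm
    have h2 : ((D.emb (ψ (-u.1, u.2)) : S3) : E4) = G ((-u.1, u.2), (0, 1)) :=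
      (hGf _ (hcd hu2)).symm
    rw [h1, h2, hHG _ _ (hmemO _ (hcd hu)), Set.Icc.coe_one, hE1 _ _ hu]
  have hbd : (fun u => D.emb (ψ u)) '' circ2 = D.bdry := by
    rw [EmbeddedDisc.bdry, ← hψcirc, image_image]
  have hea : ({a.emb 0, a.emb 1} : Set S3) = {D.emb (ψ (0, 1)), D.emb (ψ (0, -1))} := by
    rw [hψp, hψq, hpa, hqa]
  obtain ⟨σ, hσ, hca, hca'⟩ := aux_arcs (fun u => D.emb (ψ u)) (fun x : S3 => (g (x : E4)).1.1)
    (by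
      have h1 : ContinuousOn (fun x : S3 => g (x : E4)) ((fun u => D.emb (ψ u)) '' circ2) := by
        refine hg.continuousOn.comp continuous_subtype_val.continuousOn ?_
        rintro _ ⟨u, hu, rfl⟩
        exact ⟨(u, (0, 1)), hmemO u (hcd hu), hGf u (hcd hu)⟩
      exact (continuous_fst.comp continuous_fst).comp_continuousOn h1)
    (by
      intro u hu
      have h1 : ((D.emb (ψ u) : S3) : E4) = G (u, (0, 1)) := (hGf _ (hcd hu)).symm
      show (g ((D.emb (ψ u) : S3) : E4)).1.1 = u.1
      rw [h1, hgG _ (hmemO u (hcd hu))])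
    a.emb a'.emb a.smooth.continuous a'.smooth.continuous a.inj a'.inj
    (by rw [hbd, hD]; rfl) hea (by rw [← hends]; exact hea)
  refine ⟨h, ?_, ?_⟩
  · intro lam
    constructor
    · have := hfix lam 1 hN
      rwa [hψp, hpa] at this
    · have := hfix lam (-1) hS
      rwa [hψq, hqa] at this
  · show h.toFun 1 '' (a.emb '' Set.Icc 0 1) = a'.emb '' Set.Icc 0 1
    rw [hca, hca']
    have hflip : ∀ u ∈ circ2, ((-u.1, u.2) : ℝ × ℝ) ∈ circ2 := by
      intro u hu
      have : u.1 ^ 2 + u.2 ^ 2 = 1 := hu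
      show (-u.1) ^ 2 + u.2 ^ 2 = 1
      linarith [neg_sq u.1]
    apply Subset.antisymm
    · rintro _ ⟨_, ⟨u, ⟨hu, hu0⟩, rfl⟩, rfl⟩
      refine ⟨(-u.1, u.2), ⟨hflip u hu, ?_⟩, (hrefl u hu).symm⟩
      simpa using hu0
    · rintro _ ⟨u, ⟨hu, hu0⟩, rfl⟩
      refine ⟨_, ⟨(-u.1, u.2), ⟨hflip u hu, ?_⟩, rfl⟩, ?_⟩
      · simpa using hu0
      · have := hrefl _ (hflip u hu)
        simpa using this
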